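/- Let Φ be an irreducible crystallographic root system of rank n and W_0 = W_Φ its Weyl group. If there exist roots β_1,…,β_n ∈ Φ such that W_0 = ⟨s_{β_1},…,s_{β_n}⟩, then for any integers k_1,…,k_n ∈ ℤ the subgroup ⟨s_{β_1,k_1},…,s_{β_n,k_n}⟩ of the affine Weyl group is isomorphic to W_0; moreover the projection p : W → W_0, s_{α,k} ↦ s_α, restricts to an isomorphism on this subgroup. -/

import Mathlib

open scoped RealInnerProductSpace

noncomputable section

variable {V : Type*} [NormedAddCommGroup V] [InnerProductSpace ℝ V]

/-- The coroot `α^∨ = 2α/(α|α)` of a vector `α`. -/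
def coroot (α : V) : V := (2 / ⟪α, α⟫) • α

/-- The affine reflection `s_{α,k} : v ↦ v - ((v|α) - k)α^∨`, as a function. -/
def sAffFun (α : V) (k : ℝ) (v : V) : V := v - (⟪v, α⟫ - k) • coroot α

theorem sAffFun_involutive (α : V) (k : ℝ) : Function.Involutive (sAffFun α k) := by
  intro v
  by_cases h : α = 0
  · simp [sAffFun, coroot, h]
  · have h2 : ⟪α, α⟫ ≠ 0 := by
      intro hz
      exact h (inner_self_eq_zero.mp hz)
    have hr : ⟪coroot α, α⟫ = 2 := by
      simp only [coroot, real_inner_smul_left]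
      field_simp
    simp only [sAffFun, inner_sub_left, real_inner_smul_left, hr]
    have : ⟪v, α⟫ - (⟪v, α⟫ - k) * 2 - k = -(⟪v, α⟫ - k) := by ring
    rw [this, neg_smul, sub_neg_eq_add, sub_add_cancel]

/-- The affine reflection `s_{α,k}` as a permutation of `V`. -/
def sAff (α : V) (k : ℝ) : Equiv.Perm V :=
  Function.Involutive.toPerm _ (sAffFun_involutive α k)

/-- The translation `Tr(x) : v ↦ v + x`, as a function. -/
def trFun (x : V) (v : V) : V := v + x

/-- The translation `Tr(x) : v ↦ v + x`, as a permutation of `V`. -/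
def trPerm (x : V) : Equiv.Perm V := Equiv.addRight x

/-- A crystallographic (reduced) root system in a Euclidean space `V`. -/
structure IsCrystRootSystem (Φ : Set V) : Prop where
  finite : Φ.Finite
  nonempty : Φ.Nonempty
  ne_zero : ∀ α ∈ Φ, α ≠ 0
  spanning : Submodule.span ℝ Φ = ⊤
  refl_mem : ∀ α ∈ Φ, ∀ β ∈ Φ, sAffFun α 0 β ∈ Φ
  reduced : ∀ α ∈ Φ, ∀ c : ℝ, c • α ∈ Φ → c = 1 ∨ c = -1
  cryst : ∀ α ∈ Φ, ∀ β ∈ Φ, ∃ n : ℤ, 2 * ⟪β, α⟫ / ⟪α, α⟫ = (n : ℝ)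

/-- The (finite) Weyl group of `Φ`, generated by the reflections `s_α`. -/
def WeylGroup (Φ : Set V) : Subgroup (Equiv.Perm V) :=
  Subgroup.closure {g | ∃ α ∈ Φ, g = sAff α 0}

/-- The affine Weyl group of `Φ`, generated by all affine reflections `s_{α,k}`, `k ∈ ℤ`. -/
def AffWeylGroup (Φ : Set V) : Subgroup (Equiv.Perm V) :=
  Subgroup.closure {g | ∃ α ∈ Φ, ∃ k : ℤ, g = sAff α k}

/-- The set of reflections of the affine Weyl group. -/
def AffReflections (Φ : Set V) : Set (Equiv.Perm V) :=
  {g | ∃ α ∈ Φ, ∃ k : ℤ, g = sAff α k}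

/-- The coweight lattice `P(Φ^∨) = {x | (x|α) ∈ ℤ for all α ∈ Φ}`. -/
def coweightLattice (Φ : Set V) : Set V :=
  {x | ∀ α ∈ Φ, ∃ n : ℤ, ⟪x, α⟫ = (n : ℝ)}

/-- `Φ` is irreducible: it admits no decomposition into two nonempty orthogonal parts. -/
def IsIrreducibleRS (Φ : Set V) : Prop :=
  ∀ Φ₁ Φ₂ : Set V, Φ₁ ∪ Φ₂ = Φ → (∀ α ∈ Φ₁, ∀ β ∈ Φ₂, ⟪α, β⟫ = 0) →
    Φ₁ = ∅ ∨ Φ₂ = ∅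

theorem weyl_map_sub (Φ : Set V) (w : Equiv.Perm V) (hw : w ∈ WeylGroup Φ) :
    ∀ a b : V, w (a - b) = w a - w b := by
  refine Subgroup.closure_induction (p := fun w _ => ∀ a b : V, w (a - b) = w a - w b)
    ?_ ?_ ?_ ?_ hw
  · rintro _ ⟨α, _, rfl⟩ a b
    change sAffFun α 0 (a - b) = sAffFun α 0 a - sAffFun α 0 b
    simp only [sAffFun, inner_sub_left, sub_zero]
    module
  · intro a b
    rfl
  · intro f g _ _ hf hg a b
    simp only [Equiv.Perm.mul_apply, hg, hf]
  · intro f _ hf a b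
    apply f.injective
    rw [hf]
    simp

theorem exists_center (Φ : Set V) (hΦ : IsCrystRootSystem Φ)
    (n : ℕ) (hrank : Module.finrank ℝ V = n) (β : Fin n → V)
    (hgen : WeylGroup Φ = Subgroup.closure (Set.range fun i => sAff (β i) 0))
    (k : Fin n → ℝ) : ∃ x : V, ∀ i, ⟪x, β i⟫ = k i := by
  have hfd : FiniteDimensional ℝ V :=
    Module.finite_def.2 ((Submodule.fg_def).2 ⟨Φ, hΦ.finite, hΦ.spanning⟩)
  let L : V →ₗ[ℝ] (Fin n → ℝ) := LinearMap.pi fun i => (innerₗ V (β i))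
  have hL : ∀ v i, L v i = ⟪v, β i⟫ := by
    intro v i
    simp [L, real_inner_comm]
  have hinj : Function.Injective L := by
    rw [← LinearMap.ker_eq_bot, LinearMap.ker_eq_bot']
    intro v hv
    have hle : WeylGroup Φ ≤ MulAction.stabilizer (Equiv.Perm V) v := by
      rw [hgen, Subgroup.closure_le]
      rintro _ ⟨i, rfl⟩
      change sAffFun (β i) 0 v = v
      have : ⟪v, β i⟫ = 0 := by rw [← hL, hv]; rfl
      simp [sAffFun, this]
    have horth : ∀ α ∈ Φ, ⟪v, α⟫ = 0 := by
      intro α hα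
      have h1 : sAff α 0 ∈ WeylGroup Φ := Subgroup.subset_closure ⟨α, hα, rfl⟩
      have h2 : sAffFun α 0 v = v := hle h1
      have h0 := hΦ.ne_zero α hα
      have h3 : ⟪α, α⟫ ≠ 0 := fun hz => h0 (inner_self_eq_zero.mp hz)
      simpa [sAffFun, coroot, h0, h3] using h2
    have htop : Submodule.span ℝ Φ ≤ LinearMap.ker (innerₗ V v) := by
      rw [Submodule.span_le]
      intro α hα
      simpa using horth α hα
    rw [hΦ.spanning] at htop
    have : v ∈ LinearMap.ker (innerₗ V v) := htop trivial
    simpa using this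
  have hsurj : Function.Surjective L :=
    (LinearMap.injective_iff_surjective_of_finrank_eq_finrank (by simp [hrank])).1 hinj
  obtain ⟨x, hx⟩ := hsurj k
  exact ⟨x, fun i => by rw [← hL, hx]⟩

theorem statement_16 (Φ : Set V) (hΦ : IsCrystRootSystem Φ) (hirr : IsIrreducibleRS Φ)
    (n : ℕ) (hrank : Module.finrank ℝ V = n)
    (β : Fin n → V) (hβ : ∀ i, β i ∈ Φ)
    (hgen : WeylGroup Φ = Subgroup.closure (Set.range fun i => sAff (β i) 0))
    (k : Fin n → ℤ) :
    ∃ φ : ↥(Subgroup.closure (Set.range fun i => sAff (β i) (k i : ℝ))) ≃* ↥(WeylGroup Φ),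
      ∀ g : ↥(Subgroup.closure (Set.range fun i => sAff (β i) (k i : ℝ))),
        ∀ v : V, ((φ g : Equiv.Perm V)) v = (g : Equiv.Perm V) v - (g : Equiv.Perm V) 0 := by
  obtain ⟨x, hx⟩ := exists_center Φ hΦ n hrank β hgen (fun i => (k i : ℝ))
  let c := MulAut.conj (trPerm (-x))
  have hc : ∀ (g : Equiv.Perm V) (v : V), c g v = g (v + x) - x := by
    intro g v
    simp [c, MulAut.conj_apply, trPerm, sub_eq_add_neg]
  have hmap : (Subgroup.closure (Set.range fun i => sAff (β i) (k i : ℝ))).map c.toMonoidHom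
      = WeylGroup Φ := by
    rw [MonoidHom.map_closure, hgen, ← Set.range_comp]
    congr 2
    funext i
    ext v
    refine (hc _ v).trans ?_
    change sAffFun (β i) (k i) (v + x) - x = sAffFun (β i) 0 v
    simp only [sAffFun, inner_add_left, hx]
    module
  refine ⟨(c.subgroupMap _).trans (MulEquiv.subgroupCongr hmap), ?_⟩
  intro g v
  have hval : ((((c.subgroupMap _).trans (MulEquiv.subgroupCongr hmap)) g :
      WeylGroup Φ) : Equiv.Perm V) = c g := rfl
  rw [hval]
  have hmem : c (g : Equiv.Perm V) ∈ WeylGroup Φ := hmap ▸ Subgroup.mem_map_of_mem _ g.2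
  have hsub := weyl_map_sub Φ _ hmem
  have h1 := hsub (v - x) (0 - x)
  rw [sub_sub_sub_cancel_right, sub_zero] at h1
  rw [h1, hc, hc]
  simp


end
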